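/- Every original customer has at least one visited copy: Suppose constraints (5) Σ_{i∈N̄_j} Σ_{m∈M_i} p_i^m · s_i^m = d_j for every j ∈ C; (6) Σ_{m∈M_j} y_j^m = q_j for all j ∈ C; and (7) s_j^m ≤ y_j^m · d_j / p_j^m for all j ∈ C and m ∈ M_j hold, with s_j^m ≥ 0, d_j > 0 and p_j^m ∈ (0,1]. Then for every j ∈ C, Σ_{i∈N̄_j} q_i ≥ 1; that is, at least one copy of every original customer is visited by some primary vehicle. -/

import Mathlib

open Finset

/-- Every original customer has at least one visited copy: under constraints
(5) `Σ_{i∈N̄_j} Σ_{m∈M_i} p_i^m · s_i^m = d_j`, (6) `Σ_{m∈M_j} y_j^m = q_j`,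
and (7) `s_j^m ≤ y_j^m · d_j / p_j^m`, with `s ≥ 0`, `d > 0` and
`p ∈ (0,1]`, every original customer (copies indexed by `K`) satisfies
`Σ_{i∈N̄_j} q_i ≥ 1`. Customer copies are `C = V × K`; `N̄_{(v,k)}` is
`{(v,k') : k' ∈ K}`; modes `M_{(v,k)} = {1,…,b v}` and demand `d v` are equal
on copies of the same original customer. -/
theorem at_least_one_copy_visited
    (V K : Type) [Fintype V] [Fintype K]
    [DecidableEq V] [DecidableEq K]
    [Nonempty V] [Nonempty K]
    (b : V → ℕ) (hb : ∀ v, 1 ≤ b v)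
    (d : V → ℝ) (hd : ∀ v, 0 < d v)
    (p : V × K → ℕ → ℝ)
    (hp : ∀ c m, m ∈ Finset.Icc 1 (b c.1) → 0 < p c m ∧ p c m ≤ 1)
    (q : V × K → ℝ) (hq01 : ∀ c, q c = 0 ∨ q c = 1)
    (y : V × K → ℕ → ℝ) (hy01 : ∀ c m, y c m = 0 ∨ y c m = 1)
    (s : V × K → ℕ → ℝ) (hs_nonneg : ∀ c m, 0 ≤ s c m)
    -- constraint (5)
    (h5 : ∀ c : V × K,
      ∑ k' : K, ∑ m ∈ Finset.Icc 1 (b c.1), p (c.1, k') m * s (c.1, k') m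
        = d c.1)
    -- constraint (6)
    (h6 : ∀ c : V × K, ∑ m ∈ Finset.Icc 1 (b c.1), y c m = q c)
    -- constraint (7)
    (h7 : ∀ (c : V × K), ∀ m ∈ Finset.Icc 1 (b c.1),
      s c m ≤ y c m * (d c.1 / p c m)) :
    ∀ c : V × K, 1 ≤ ∑ k' : K, q (c.1, k') := by
  intro c
  have key : d c.1 ≤ d c.1 * ∑ k' : K, q (c.1, k') := by
    calc d c.1 = _ := (h5 c).symm
      _ ≤ ∑ k' : K, ∑ m ∈ Finset.Icc 1 (b c.1), d c.1 * y (c.1, k') m := by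
        refine Finset.sum_le_sum fun k' _ => Finset.sum_le_sum fun m hm => ?_
        have hpos := (hp (c.1, k') m hm).1
        have h := mul_le_mul_of_nonneg_left (h7 (c.1, k') m hm) hpos.le
        refine h.trans (le_of_eq ?_)
        have hne := hpos.ne'
        field_simp
      _ = d c.1 * ∑ k' : K, q (c.1, k') := by
        rw [Finset.mul_sum]
        refine Finset.sum_congr rfl fun k' _ => ?_
        rw [← Finset.mul_sum, ← h6 (c.1, k')]
  have := hd c.1
  exact le_of_mul_le_mul_left (by simpa using key) this
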